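/- arXiv:1810.12805 — 2 statements merged into one kernel-verified Lean document; each statement's English description precedes it below -/
import Mathlib

section
/- Every critical point of ℓ_λ in U(λ,θ) is an isolated local minimum: if W ∈ U(λ,θ), ℓ_λ is differentiable at W, and ∇ℓ_λ(W) = 0, then there exists ε > 0 such that ℓ_λ(V) > ℓ_λ(W) for all V with 0 < ‖V − W‖ < ε. -/
open scoped BigOperators

/-- Index set for all weights of the network: a weight `w^i_{j,k}` connects
neuron `j` in layer `i` to neuron `k` in layer `i+1`. -/
abbrev WeightIdx (n : ℕ → ℕ) (H : ℕ) : Type :=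
  (i : Fin (H + 1)) × (Fin (n i) × Fin (n (i + 1)))

/-- Weight space `ℝ^m`, with the Euclidean norm. -/
abbrev WeightSpace (n : ℕ → ℕ) (H : ℕ) : Type :=
  EuclideanSpace ℝ (WeightIdx n H)

/-- Activations of the feed-forward ReLU network:
`x_0 = a`, `x_{k+1} = σ(W_k^T x_k)`. -/
def netAct (n : ℕ → ℕ) (H : ℕ) (W : WeightSpace n H)
    (a : EuclideanSpace ℝ (Fin (n 0))) : (k : ℕ) → k ≤ H + 1 → (Fin (n k) → ℝ)
  | 0, _ => a
  | k + 1, h => fun j =>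
      max (∑ l : Fin (n k), W ⟨⟨k, h⟩, (l, j)⟩ * netAct n H W a k (Nat.le_of_succ_le h) l) 0

/-- Scalar output of the ReLU network, `y(a, W)`. -/
def netOut (n : ℕ → ℕ) (H : ℕ) (hout : n (H + 1) = 1) (W : WeightSpace n H)
    (a : EuclideanSpace ℝ (Fin (n 0))) : ℝ :=
  netAct n H W a (H + 1) le_rfl ⟨0, by omega⟩

/-- Quadratic training loss `ℓ(W)`. -/
noncomputable def loss (n : ℕ → ℕ) (H N : ℕ) (hout : n (H + 1) = 1)
    (a : Fin N → EuclideanSpace ℝ (Fin (n 0)))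
    (f : EuclideanSpace ℝ (Fin (n 0)) → ℝ) (W : WeightSpace n H) : ℝ :=
  (1 / (2 * (N : ℝ))) * ∑ i, (f (a i) - netOut n H hout W (a i)) ^ 2

/-- Regularized loss `ℓ_λ(W) = ℓ(W) + (λ/2)‖W‖²`. -/
noncomputable def lossReg (n : ℕ → ℕ) (H N : ℕ) (hout : n (H + 1) = 1)
    (a : Fin N → EuclideanSpace ℝ (Fin (n 0)))
    (f : EuclideanSpace ℝ (Fin (n 0)) → ℝ) (lam : ℝ) (W : WeightSpace n H) : ℝ :=
  loss n H N hout a f W + lam / 2 * ‖W‖ ^ 2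

/-- The `i`-th weight matrix `W_i` of a weight vector `W`. -/
def block (n : ℕ → ℕ) (H : ℕ) (W : WeightSpace n H) (i : Fin (H + 1)) :
    Matrix (Fin (n i)) (Fin (n (i + 1))) ℝ :=
  Matrix.of fun j k => W ⟨i, (j, k)⟩

/-- Operator norm (induced by the Euclidean norms) of a matrix. -/
noncomputable def opNorm2 {p q : ℕ} (M : Matrix (Fin p) (Fin q) ℝ) : ℝ :=
  ‖LinearMap.toContinuousLinearMap (Matrix.toEuclideanLin M)‖

/-- `‖W‖_* = max_i ‖W_i‖₂`. -/
noncomputable def starNorm (n : ℕ → ℕ) (H : ℕ) (W : WeightSpace n H) : ℝ :=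
  ⨆ i : Fin (H + 1), opNorm2 (block n H W i)

/-- The set `U(λ,θ)`. -/
noncomputable def Uset (n : ℕ → ℕ) (H N : ℕ) (hout : n (H + 1) = 1)
    (a : Fin N → EuclideanSpace ℝ (Fin (n 0)))
    (f : EuclideanSpace ℝ (Fin (n 0)) → ℝ) (lam θ r : ℝ) : Set (WeightSpace n H) :=
  {W | Real.sqrt (loss n H N hout a f W) * starNorm n H W ^ (H - 1) <
    (lam - θ) / (Real.sqrt 2 * ((H : ℝ) * ((H : ℝ) + 1)) * r)}

/-!
The ReLU has a one-sided derivative `σ'(z; h)`, equal to `h`, `0` or `max h 0` according to the sign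
of `z`, so by the chain rule the network has one-sided directional derivatives `y'(W; D)`. Near a
fixed `z` the identity `σ(u) - σ(z) = σ'(z; u - z)` is *exact*, hence the error of the first-order
expansion of `y` comes only from the interaction of different layers and satisfies
`|y(W + D) - y(W) - y'(W; D)| ≤ (H (H + 1) / 2) (‖W‖_* + ‖D‖) ^ (H - 1) ‖D‖² ‖a‖`.
By Cauchy–Schwarz this error lowers the loss by at most `√(2 ℓ(W))` times the right-hand side, which
on `U(λ, θ)` is at most `(λ - θ) / 2 * ‖D‖²` for small `D`. The regularizer gains `λ / 2 * ‖D‖²`, so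
where all directional derivatives of `ℓ_λ` are nonnegative, `ℓ_λ` grows by at least `θ / 2 * ‖D‖²`.
-/

open Filter Set Topology

section ReLU

variable {ι : Type*}

/-- The coordinatewise ReLU activation `σ`, as a self-map of Euclidean space. -/
def relu (x : EuclideanSpace ℝ ι) : EuclideanSpace ℝ ι :=
  WithLp.toLp 2 fun i => max (x i) 0

/-- The one-sided directional derivative `σ'(z; h)` of the coordinatewise ReLU at `z` in the
direction `h`. -/
noncomputable def reluDirDeriv (z h : EuclideanSpace ℝ ι) : EuclideanSpace ℝ ι :=
  WithLp.toLp 2 fun i => if 0 < z i then h i else if z i < 0 then 0 else max (h i) 0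

theorem continuous_relu : Continuous (relu : EuclideanSpace ℝ ι → EuclideanSpace ℝ ι) := by
  unfold relu
  fun_prop

theorem continuous_reluDirDeriv (z : EuclideanSpace ℝ ι) : Continuous (reluDirDeriv z) := by
  refine (PiLp.continuous_toLp 2 _).comp (continuous_pi fun i => ?_)
  split_ifs <;> fun_prop

theorem reluDirDeriv_smul (z h : EuclideanSpace ℝ ι) {t : ℝ} (ht : 0 ≤ t) :
    reluDirDeriv z (t • h) = t • reluDirDeriv z h := by
  ext i
  simp only [reluDirDeriv, PiLp.smul_apply, smul_eq_mul]
  split_ifs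
  · rfl
  · simp
  · rw [mul_max_of_nonneg _ _ ht, mul_zero]

theorem eventually_relu_sub_eq_reluDirDeriv [Finite ι] (z : EuclideanSpace ℝ ι) :
    ∀ᶠ u in 𝓝 z, relu u - relu z = reluDirDeriv z (u - z) := by
  have hsign (i : ι) : ∀ᶠ u in 𝓝 z, (0 < z i → 0 < u i) ∧ (z i < 0 → u i < 0) := by
    have hi : Tendsto (fun u : EuclideanSpace ℝ ι => u i) (𝓝 z) (𝓝 (z i)) :=
      (EuclideanSpace.proj (𝕜 := ℝ) i).continuous.tendsto z
    exact (eventually_imp_distrib_left.2 fun hz => hi.eventually_const_lt hz).and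
      (eventually_imp_distrib_left.2 fun hz => hi.eventually_lt_const hz)
  filter_upwards [eventually_all.2 hsign] with u hu
  ext i
  obtain ⟨hpos, hneg⟩ := hu i
  rcases lt_trichotomy (z i) 0 with hz | hz | hz
  · simp [relu, reluDirDeriv, hz, hz.le, hz.not_gt, (hneg hz).le]
  · simp [relu, reluDirDeriv, hz]
  · simp [relu, reluDirDeriv, hz, hz.le, (hpos hz).le]

variable [Fintype ι]

theorem hasDerivWithinAt_relu_comp {g : ℝ → EuclideanSpace ℝ ι} {g' : EuclideanSpace ℝ ι} {x : ℝ}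
    (hg : HasDerivWithinAt g g' (Ici x) x) :
    HasDerivWithinAt (fun t => relu (g t)) (reluDirDeriv (g x) g') (Ici x) x := by
  have hslope := hasDerivWithinAt_iff_tendsto_slope' self_notMem_Ioi |>.1 hg.Ioi_of_Ici
  have hexact : ∀ᶠ t in 𝓝[>] x, relu (g t) - relu (g x) = reluDirDeriv (g x) (g t - g x) :=
    hg.Ioi_of_Ici.continuousWithinAt.eventually (eventually_relu_sub_eq_reluDirDeriv (g x))
  rw [← hasDerivWithinAt_Ioi_iff_Ici, hasDerivWithinAt_iff_tendsto_slope' self_notMem_Ioi]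
  refine ((continuous_reluDirDeriv (g x)).tendsto g' |>.comp hslope).congr' ?_
  filter_upwards [hexact, self_mem_nhdsWithin] with t ht htx
  simp only [Function.comp_apply, slope_def_module, ht]
  exact reluDirDeriv_smul _ _ (inv_nonneg.2 (sub_nonneg.2 (le_of_lt htx)))

theorem norm_le_norm_of_forall_abs_le {x y : EuclideanSpace ℝ ι} (h : ∀ i, |x i| ≤ |y i|) :
    ‖x‖ ≤ ‖y‖ := by
  rw [EuclideanSpace.norm_eq, EuclideanSpace.norm_eq]
  gcongr with i
  exact h i

theorem norm_relu_sub_le (x y : EuclideanSpace ℝ ι) : ‖relu x - relu y‖ ≤ ‖x - y‖ :=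
  norm_le_norm_of_forall_abs_le fun i => abs_max_sub_max_le_abs (x i) (y i) 0

theorem norm_relu_le (x : EuclideanSpace ℝ ι) : ‖relu x‖ ≤ ‖x‖ :=
  norm_le_norm_of_forall_abs_le fun i => by
    simpa [relu] using abs_max_sub_max_le_abs (x i) 0 0

theorem norm_reluDirDeriv_sub_le (z h h' : EuclideanSpace ℝ ι) :
    ‖reluDirDeriv z h - reluDirDeriv z h'‖ ≤ ‖h - h'‖ := by
  refine norm_le_norm_of_forall_abs_le fun i => ?_
  simp only [reluDirDeriv, PiLp.sub_apply]
  split_ifs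
  · exact le_rfl
  · simp
  · exact abs_max_sub_max_le_abs (h i) (h' i) 0

end ReLU

section ForwardPass

/-- A sequence of linear layers `A k : ℝ^(ι k) → ℝ^(ι (k + 1))`. It is infinite so that the
recursions below carry no bound on the depth; a finite network is padded with zero layers. -/
abbrev LayerSeq (ι : ℕ → Type*) [∀ k, Fintype (ι k)] : Type _ :=
  ∀ k, EuclideanSpace ℝ (ι k) →L[ℝ] EuclideanSpace ℝ (ι (k + 1))

variable {ι : ℕ → Type*} [∀ k, Fintype (ι k)]

/-- The activations `x₀ = x`, `x_{k+1} = σ(A_k x_k)` of a ReLU network with layers `A`. -/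
def forwardPass (A : LayerSeq ι) (x : EuclideanSpace ℝ (ι 0)) : ∀ k, EuclideanSpace ℝ (ι k)
  | 0 => x
  | k + 1 => relu (A k (forwardPass A x k))

/-- The one-sided directional derivative of the activations at the layers `A` in the direction `D`,
given by the chain rule. -/
noncomputable def forwardDirDeriv (A D : LayerSeq ι) (x : EuclideanSpace ℝ (ι 0)) :
    ∀ k, EuclideanSpace ℝ (ι k)
  | 0 => 0
  | k + 1 => reluDirDeriv (A k (forwardPass A x k))
      (D k (forwardPass A x k) + A k (forwardDirDeriv A D x k))

variable {A D : LayerSeq ι} {M δ : ℝ}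

theorem continuous_forwardPass (x : EuclideanSpace ℝ (ι 0)) (k : ℕ) :
    Continuous fun A : LayerSeq ι => forwardPass A x k := by
  induction k with
  | zero => exact continuous_const
  | succ k ih => exact continuous_relu.comp ((continuous_apply k).clm_apply ih)

theorem hasDerivWithinAt_forwardPass (A D : LayerSeq ι) (x : EuclideanSpace ℝ (ι 0)) (k : ℕ) :
    HasDerivWithinAt (fun t : ℝ => forwardPass (A + t • D) x k) (forwardDirDeriv A D x k)
      (Ici 0) 0 := by
  induction k with
  | zero => exact hasDerivWithinAt_const _ _ _
  | succ k ih =>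
    have hzero : A + (0 : ℝ) • D = A := by rw [zero_smul ℝ D, add_zero]
    have hlayer : HasDerivWithinAt (fun t : ℝ => A k + t • D k) (D k) (Ici 0) 0 := by
      simpa using ((hasDerivWithinAt_id (0 : ℝ) (Ici 0)).smul_const (D k)).const_add (A k)
    simpa [forwardPass, forwardDirDeriv, hzero] using
      hasDerivWithinAt_relu_comp (hlayer.clm_apply ih)

theorem norm_forwardPass_le (hA : ∀ k, ‖A k‖ ≤ M) (x : EuclideanSpace ℝ (ι 0)) (k : ℕ) :
    ‖forwardPass A x k‖ ≤ M ^ k * ‖x‖ := by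
  induction k with
  | zero => simp [forwardPass]
  | succ k ih =>
    calc ‖forwardPass A x (k + 1)‖ ≤ ‖A k (forwardPass A x k)‖ := norm_relu_le _
      _ ≤ M * (M ^ k * ‖x‖) := (A k).le_of_opNorm_le_of_le (hA k) ih
      _ = M ^ (k + 1) * ‖x‖ := by ring

theorem norm_forwardPass_add_sub_le (hA : ∀ k, ‖A k‖ ≤ M) (hAD : ∀ k, ‖A k + D k‖ ≤ M)
    (hD : ∀ k, ‖D k‖ ≤ δ) (x : EuclideanSpace ℝ (ι 0)) (k : ℕ) :
    ‖forwardPass (A + D) x k - forwardPass A x k‖ ≤ k * M ^ (k - 1) * δ * ‖x‖ := by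
  induction k with
  | zero => simp [forwardPass]
  | succ k ih =>
    set u := forwardPass (A + D) x k
    set v := forwardPass A x k
    calc ‖forwardPass (A + D) x (k + 1) - forwardPass A x (k + 1)‖
        ≤ ‖(A k + D k) u - A k v‖ := norm_relu_sub_le _ _
      _ = ‖(A k + D k) (u - v) + D k v‖ := by
          congr 1; simp only [map_sub, add_apply]; abel
      _ ≤ M * (k * M ^ (k - 1) * δ * ‖x‖) + δ * (M ^ k * ‖x‖) :=
          norm_add_le_of_le ((A k + D k).le_of_opNorm_le_of_le (hAD k) ih)
            ((D k).le_of_opNorm_le_of_le (hD k) (norm_forwardPass_le hA x k))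
      _ = (k + 1 : ℕ) * M ^ (k + 1 - 1) * δ * ‖x‖ := by
          rcases k with _ | k
          · simp
          · simp only [Nat.add_sub_cancel]; push_cast; ring

theorem eventually_forwardPass_add_sub_eq_reluDirDeriv (A : LayerSeq ι)
    (x : EuclideanSpace ℝ (ι 0)) (k : ℕ) :
    ∀ᶠ D in 𝓝 (0 : LayerSeq ι), forwardPass (A + D) x (k + 1) - forwardPass A x (k + 1) =
      reluDirDeriv (A k (forwardPass A x k))
        ((A k + D k) (forwardPass (A + D) x k) - A k (forwardPass A x k)) := by
  have hcont : Continuous fun D : LayerSeq ι => (A k + D k) (forwardPass (A + D) x k) :=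
    (continuous_const.add (continuous_apply k)).clm_apply
      ((continuous_forwardPass x k).comp (continuous_const.add continuous_id))
  have hlim : Tendsto (fun D : LayerSeq ι => (A k + D k) (forwardPass (A + D) x k)) (𝓝 0)
      (𝓝 (A k (forwardPass A x k))) := by
    simpa using hcont.tendsto 0
  exact hlim.eventually (eventually_relu_sub_eq_reluDirDeriv _)

theorem eventually_norm_forwardPass_add_sub_sub_le (A : LayerSeq ι) (x : EuclideanSpace ℝ (ι 0))
    (k : ℕ) :
    ∀ᶠ D in 𝓝 (0 : LayerSeq ι), ∀ M δ : ℝ, (∀ k, ‖A k‖ ≤ M) → (∀ k, ‖A k + D k‖ ≤ M) →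
      (∀ k, ‖D k‖ ≤ δ) →
      ‖forwardPass (A + D) x k - forwardPass A x k - forwardDirDeriv A D x k‖ ≤
        k.choose 2 * M ^ (k - 2) * δ ^ 2 * ‖x‖ := by
  induction k with
  | zero => simp [forwardPass, forwardDirDeriv]
  | succ k ih =>
    filter_upwards [ih, eventually_forwardPass_add_sub_eq_reluDirDeriv A x k]
      with D ih hexact M δ hA hAD hD
    set u := forwardPass (A + D) x k
    set v := forwardPass A x k
    set v' := forwardDirDeriv A D x k
    calc ‖forwardPass (A + D) x (k + 1) - forwardPass A x (k + 1) - forwardDirDeriv A D x (k + 1)‖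
        ≤ ‖(A k + D k) u - A k v - (D k v + A k v')‖ := by
          rw [hexact]
          exact norm_reluDirDeriv_sub_le _ _ _
      _ = ‖A k (u - v - v') + D k (u - v)‖ := by
          congr 1; simp only [map_sub, add_apply]; abel
      _ ≤ M * (k.choose 2 * M ^ (k - 2) * δ ^ 2 * ‖x‖) + δ * (k * M ^ (k - 1) * δ * ‖x‖) :=
          norm_add_le_of_le ((A k).le_of_opNorm_le_of_le (hA k) (ih M δ hA hAD hD))
            ((D k).le_of_opNorm_le_of_le (hD k) (norm_forwardPass_add_sub_le hA hAD hD x k))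
      _ = (k + 1).choose 2 * M ^ (k + 1 - 2) * δ ^ 2 * ‖x‖ := by
          rcases k with _ | _ | k
          · simp
          · simp; ring
          · simp only [Nat.cast_choose_two, Nat.add_sub_cancel, Nat.reduceSubDiff]
            push_cast; ring

end ForwardPass

section OperatorNorm

theorem opNorm2_transpose {p q : ℕ} (M : Matrix (Fin p) (Fin q) ℝ) :
    opNorm2 M.transpose = opNorm2 M := by
  open scoped Matrix.Norms.L2Operator in
  simpa [Matrix.l2_opNorm_def, opNorm2] using Matrix.l2_opNorm_conjTranspose M

theorem opNorm2_le_sqrt_sum_sq {p q : ℕ} (M : Matrix (Fin p) (Fin q) ℝ) :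
    opNorm2 M ≤ √(∑ i, ∑ j, M i j ^ 2) := by
  refine ContinuousLinearMap.opNorm_le_bound _ (Real.sqrt_nonneg _) fun x => ?_
  rw [EuclideanSpace.norm_eq, EuclideanSpace.norm_eq, ← Real.sqrt_mul (by positivity),
    Finset.sum_mul]
  gcongr with i
  simpa [Matrix.toLpLin_apply, Matrix.mulVec, dotProduct] using
    Finset.sum_mul_sq_le_sq_mul_sq Finset.univ (M i) x

variable {n : ℕ → ℕ} {H : ℕ}

theorem opNorm2_block_le_starNorm (W : WeightSpace n H) (i : Fin (H + 1)) :
    opNorm2 (block n H W i) ≤ starNorm n H W :=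
  le_ciSup (f := fun i => opNorm2 (block n H W i)) (finite_range _).bddAbove i

theorem starNorm_nonneg (W : WeightSpace n H) : 0 ≤ starNorm n H W :=
  Real.iSup_nonneg fun _ => norm_nonneg _

theorem opNorm2_block_le_norm (W : WeightSpace n H) (i : Fin (H + 1)) :
    opNorm2 (block n H W i) ≤ ‖W‖ := by
  refine (opNorm2_le_sqrt_sum_sq _).trans ?_
  rw [EuclideanSpace.norm_eq, Fintype.sum_sigma]
  simp only [Real.norm_eq_abs, sq_abs]
  gcongr
  rw [← Fintype.sum_prod_type']
  exact Finset.single_le_sum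
    (f := fun i : Fin (H + 1) => ∑ jk : Fin (n i) × Fin (n (i + 1)), W ⟨i, jk⟩ ^ 2)
    (fun i _ => by positivity) (Finset.mem_univ i)

theorem starNorm_le_norm (W : WeightSpace n H) : starNorm n H W ≤ ‖W‖ :=
  ciSup_le (opNorm2_block_le_norm W)

end OperatorNorm

section Network

variable {n : ℕ → ℕ} {H : ℕ}

/-- The layers `x ↦ W_kᵀ x` of the network with weights `W`, padded with zeros beyond layer `H`. -/
noncomputable def layers : WeightSpace n H →ₗ[ℝ] LayerSeq fun k => Fin (n k) where
  toFun W k :=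
    if h : k ≤ H then
      (Matrix.toEuclideanLin (block n H W ⟨k, Nat.lt_succ_of_le h⟩).transpose).toContinuousLinearMap
    else 0
  map_add' V W := by
    ext k x j
    by_cases h : k ≤ H
    · simp [h, block, Matrix.mulVec, dotProduct, add_mul, Finset.sum_add_distrib]
    · simp [h]
  map_smul' c W := by
    ext k x j
    by_cases h : k ≤ H
    · simp [h, block, Matrix.mulVec, dotProduct, mul_assoc, Finset.mul_sum]
    · simp [h]

theorem layers_apply (W : WeightSpace n H) {k : ℕ} (h : k ≤ H)
    (x : EuclideanSpace ℝ (Fin (n k))) (j : Fin (n (k + 1))) :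
    layers W k x j = ∑ l, W ⟨⟨k, Nat.lt_succ_of_le h⟩, (l, j)⟩ * x l := by
  simp [layers, h, block, Matrix.mulVec, dotProduct]

theorem norm_layers_le (W : WeightSpace n H) (k : ℕ) : ‖layers W k‖ ≤ starNorm n H W := by
  by_cases h : k ≤ H
  · simpa [layers, h, opNorm2] using
      (opNorm2_transpose _).trans_le (opNorm2_block_le_starNorm W ⟨k, Nat.lt_succ_of_le h⟩)
  · simpa [layers, h] using starNorm_nonneg W

theorem continuous_layers : Continuous (layers : WeightSpace n H → LayerSeq fun k => Fin (n k)) :=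
  continuous_pi fun k => (LinearMap.proj k ∘ₗ layers).continuous_of_finiteDimensional

theorem forwardPass_layers_apply (W : WeightSpace n H) (a : EuclideanSpace ℝ (Fin (n 0))) {k : ℕ}
    (h : k ≤ H + 1) (j : Fin (n k)) : forwardPass (layers W) a k j = netAct n H W a k h j := by
  induction k with
  | zero => rfl
  | succ k ih =>
    simp [forwardPass, relu, netAct, layers_apply W (Nat.le_of_succ_le_succ h),
      ih (Nat.le_of_succ_le h)]

variable (hout : n (H + 1) = 1)

theorem netOut_eq_forwardPass (W : WeightSpace n H) (a : EuclideanSpace ℝ (Fin (n 0))) :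
    netOut n H hout W a = forwardPass (layers W) a (H + 1) ⟨0, by omega⟩ :=
  (forwardPass_layers_apply W a le_rfl _).symm

/-- The one-sided directional derivative `y'(W; D)` of the network output `y(a, ·)` at `W` in the
direction `D`. -/
noncomputable def netOutDirDeriv (W D : WeightSpace n H) (a : EuclideanSpace ℝ (Fin (n 0))) : ℝ :=
  forwardDirDeriv (layers W) (layers D) a (H + 1) ⟨0, by omega⟩

theorem hasDerivWithinAt_netOut (W D : WeightSpace n H) (a : EuclideanSpace ℝ (Fin (n 0))) :
    HasDerivWithinAt (fun t : ℝ => netOut n H hout (W + t • D) a) (netOutDirDeriv hout W D a)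
      (Ici 0) 0 := by
  simp only [netOut_eq_forwardPass, map_add, map_smul]
  exact (EuclideanSpace.proj (𝕜 := ℝ) _).hasFDerivAt.comp_hasDerivWithinAt 0
    (hasDerivWithinAt_forwardPass (layers W) (layers D) a (H + 1))

theorem eventually_abs_netOut_add_sub_sub_le (W : WeightSpace n H)
    (a : EuclideanSpace ℝ (Fin (n 0))) :
    ∀ᶠ D in 𝓝 (0 : WeightSpace n H),
      |netOut n H hout (W + D) a - netOut n H hout W a - netOutDirDeriv hout W D a| ≤
        H * (H + 1) / 2 * (starNorm n H W + ‖D‖) ^ (H - 1) * ‖D‖ ^ 2 * ‖a‖ := by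
  have hlayers : Tendsto layers (𝓝 (0 : WeightSpace n H)) (𝓝 0) := by
    simpa using continuous_layers.tendsto (0 : WeightSpace n H)
  filter_upwards [hlayers.eventually
    (eventually_norm_forwardPass_add_sub_sub_le (layers W) a (H + 1))] with D hD
  have hnormD (k : ℕ) : ‖layers D k‖ ≤ ‖D‖ := (norm_layers_le D k).trans (starNorm_le_norm D)
  have hlast := hD (starNorm n H W + ‖D‖) ‖D‖
    (fun k => (norm_layers_le W k).trans (le_add_of_nonneg_right (norm_nonneg D)))
    (fun k => norm_add_le_of_le (norm_layers_le W k) (hnormD k)) hnormD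
  have hcoeff : ((H + 1).choose 2 : ℝ) = H * (H + 1) / 2 := by
    rw [Nat.cast_choose_two]; push_cast; ring
  rw [hcoeff, Nat.succ_sub_succ] at hlast
  rw [netOut_eq_forwardPass, netOut_eq_forwardPass, map_add]
  exact (PiLp.norm_apply_le _ _).trans hlast

end Network

section MeanSquares

variable {ι : Type*} [Fintype ι]

/-- Half the mean of the squares of `p`, so that the training loss is `halfMeanSq` of the residuals.
It is `0` on an empty index type. -/
noncomputable def halfMeanSq (p : ι → ℝ) : ℝ :=
  1 / (2 * (Fintype.card ι : ℝ)) * ∑ i, p i ^ 2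

theorem mean_abs_le_sqrt_halfMeanSq (p : ι → ℝ) :
    1 / (Fintype.card ι : ℝ) * ∑ i, |p i| ≤ √2 * √(halfMeanSq p) := by
  have hjensen := sum_div_card_sq_le_sum_sq_div_card (s := Finset.univ) (f := fun i => |p i|)
  simp only [sq_abs, Finset.card_univ] at hjensen
  rw [← Real.sqrt_mul zero_le_two]
  refine Real.le_sqrt_of_sq_le ?_
  calc (1 / (Fintype.card ι : ℝ) * ∑ i, |p i|) ^ 2 = ((∑ i, |p i|) / Fintype.card ι) ^ 2 := by ring
    _ ≤ (∑ i, p i ^ 2) / Fintype.card ι := hjensen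
    _ = 2 * halfMeanSq p := by rw [halfMeanSq, one_div, mul_inv]; ring

theorem mean_mul_le_of_abs_le (p e : ι → ℝ) {B : ℝ} (hB : 0 ≤ B) (he : ∀ i, |e i| ≤ B) :
    1 / (Fintype.card ι : ℝ) * ∑ i, p i * e i ≤ √2 * √(halfMeanSq p) * B := by
  have hterm (i : ι) : p i * e i ≤ |p i| * B :=
    calc p i * e i ≤ |p i| * |e i| := (le_abs_self _).trans_eq (abs_mul _ _)
      _ ≤ |p i| * B := mul_le_mul_of_nonneg_left (he i) (abs_nonneg _)
  calc 1 / (Fintype.card ι : ℝ) * ∑ i, p i * e i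
      ≤ 1 / (Fintype.card ι : ℝ) * ∑ i, |p i| * B :=
        mul_le_mul_of_nonneg_left (Finset.sum_le_sum fun i _ => hterm i) (by positivity)
    _ = 1 / (Fintype.card ι : ℝ) * (∑ i, |p i|) * B := by rw [← Finset.sum_mul, mul_assoc]
    _ ≤ √2 * √(halfMeanSq p) * B :=
        mul_le_mul_of_nonneg_right (mean_abs_le_sqrt_halfMeanSq p) hB

theorem halfMeanSq_sub_ge (p d d' : ι → ℝ) {B : ℝ} (hB : 0 ≤ B) (hd : ∀ i, |d i - d' i| ≤ B) :
    halfMeanSq p - 1 / (Fintype.card ι : ℝ) * ∑ i, p i * d' i - √2 * √(halfMeanSq p) * B ≤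
      halfMeanSq (p - d) := by
  have hexpand : halfMeanSq (p - d) =
      halfMeanSq p - 1 / (Fintype.card ι : ℝ) * ∑ i, p i * d' i -
        1 / (Fintype.card ι : ℝ) * ∑ i, p i * (d i - d' i) + halfMeanSq d := by
    have hhalf : 1 / (Fintype.card ι : ℝ) = 2 * (1 / (2 * (Fintype.card ι : ℝ))) := by
      rw [one_div, one_div, mul_inv]; ring
    simp only [halfMeanSq, hhalf, Pi.sub_apply, Finset.mul_sum, ← Finset.sum_sub_distrib,
      ← Finset.sum_add_distrib]
    exact Finset.sum_congr rfl fun i _ => by ring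
  have herror := mean_mul_le_of_abs_le p _ hB hd
  have hsq : 0 ≤ halfMeanSq d := by unfold halfMeanSq; positivity
  linarith

end MeanSquares

section Loss

variable {n : ℕ → ℕ} {H N : ℕ} (hout : n (H + 1) = 1) (a : Fin N → EuclideanSpace ℝ (Fin (n 0)))
  (f : EuclideanSpace ℝ (Fin (n 0)) → ℝ) (lam : ℝ)

theorem loss_eq_halfMeanSq (W : WeightSpace n H) :
    loss n H N hout a f W = halfMeanSq fun i => f (a i) - netOut n H hout W (a i) := by
  rw [loss, halfMeanSq, Fintype.card_fin]

/-- The one-sided directional derivative of `ℓ_λ` at `W` in the direction `D`. -/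
noncomputable def lossRegDirDeriv (W D : WeightSpace n H) : ℝ :=
  -(1 / (N : ℝ) * ∑ i, (f (a i) - netOut n H hout W (a i)) * netOutDirDeriv hout W D (a i)) +
    lam * inner ℝ W D

theorem hasDerivWithinAt_lossReg (W D : WeightSpace n H) :
    HasDerivWithinAt (fun t : ℝ => lossReg n H N hout a f lam (W + t • D))
      (lossRegDirDeriv hout a f lam W D) (Ici 0) 0 := by
  have hline : HasDerivWithinAt (fun t : ℝ => W + t • D) D (Ici 0) 0 := by
    simpa using ((hasDerivWithinAt_id (0 : ℝ) (Ici 0)).smul_const D).const_add W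
  have hloss := (HasDerivWithinAt.fun_sum (u := Finset.univ) fun i _ =>
    ((hasDerivWithinAt_netOut hout W D (a i)).const_sub (f (a i))).pow 2).const_mul
      (1 / (2 * (N : ℝ)))
  refine (hloss.add (hline.norm_sq.const_mul (lam / 2))).congr_deriv ?_
  have hsum (c : ℝ) (p q : Fin N → ℝ) :
      1 / (2 * c) * ∑ i, 2 * p i * -q i = -(1 / c * ∑ i, p i * q i) := by
    simp only [mul_neg, mul_assoc, Finset.sum_neg_distrib, ← Finset.mul_sum, one_div, mul_inv]
    ring
  simp only [zero_smul, add_zero, Nat.cast_ofNat, Nat.add_one_sub_one, pow_one, lossRegDirDeriv,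
    hsum]
  ring

theorem lossRegDirDeriv_eq_zero_of_hasFDerivAt {W : WeightSpace n H}
    (hcrit : HasFDerivAt (lossReg n H N hout a f lam) (0 : WeightSpace n H →L[ℝ] ℝ) W)
    (D : WeightSpace n H) :
    lossRegDirDeriv hout a f lam W D = 0 := by
  have hline : HasDerivAt (fun t : ℝ => lossReg n H N hout a f lam (W + t • D)) 0 0 := by
    simpa [HasLineDerivAt] using hcrit.hasLineDerivAt D
  exact (uniqueDiffWithinAt_Ici 0).eq_deriv _ (hasDerivWithinAt_lossReg hout a f lam W D)
    hline.hasDerivWithinAt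

theorem lossReg_add_ge (W D : WeightSpace n H) {B : ℝ} (hB : 0 ≤ B)
    (herror : ∀ i, |netOut n H hout (W + D) (a i) - netOut n H hout W (a i) -
      netOutDirDeriv hout W D (a i)| ≤ B) :
    lossReg n H N hout a f lam W + lossRegDirDeriv hout a f lam W D -
        √2 * √(loss n H N hout a f W) * B + lam / 2 * ‖D‖ ^ 2 ≤
      lossReg n H N hout a f lam (W + D) := by
  have hloss := halfMeanSq_sub_ge (fun i => f (a i) - netOut n H hout W (a i)) _ _ hB herror
  simp only [Pi.sub_def, sub_sub, add_sub_cancel, Fintype.card_fin, ← loss_eq_halfMeanSq] at hloss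
  simp only [lossReg, lossRegDirDeriv, norm_add_sq_real]
  linarith

variable {hout a f lam}

theorem eventually_lossError_le_of_mem_Uset {r θ : ℝ} (hH : 1 ≤ H) (hr : 0 < r)
    {W : WeightSpace n H} (hW : W ∈ Uset n H N hout a f lam θ r) :
    ∀ᶠ D in 𝓝 (0 : WeightSpace n H), √2 * √(loss n H N hout a f W) *
        (H * (H + 1) / 2 * (starNorm n H W + ‖D‖) ^ (H - 1) * ‖D‖ ^ 2 * r) ≤
      (lam - θ) / 2 * ‖D‖ ^ 2 := by
  have hcont : Continuous fun D : WeightSpace n H =>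
      √(loss n H N hout a f W) * (starNorm n H W + ‖D‖) ^ (H - 1) := by fun_prop
  have hopen : ∀ᶠ D in 𝓝 (0 : WeightSpace n H),
      √(loss n H N hout a f W) * (starNorm n H W + ‖D‖) ^ (H - 1) <
        (lam - θ) / (√2 * (H * (H + 1)) * r) :=
    (hcont.tendsto 0).eventually_lt_const (by simpa [Uset] using hW)
  filter_upwards [hopen] with D hD
  rw [lt_div_iff₀ (by positivity)] at hD
  calc _ = √(loss n H N hout a f W) * (starNorm n H W + ‖D‖) ^ (H - 1) *
        (√2 * (H * (H + 1)) * r) / 2 * ‖D‖ ^ 2 := by ring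
    _ ≤ (lam - θ) / 2 * ‖D‖ ^ 2 := by gcongr

end Loss

theorem critical_points_are_isolated_local_minima_general (n : ℕ → ℕ) (H : ℕ) (hH : 1 ≤ H)
    (hout : n (H + 1) = 1) (N : ℕ) (a : Fin N → EuclideanSpace ℝ (Fin (n 0)))
    (f : EuclideanSpace ℝ (Fin (n 0)) → ℝ) (r lam θ : ℝ) (hr : 0 < r) (hnorm : ∀ i, ‖a i‖ ≤ r)
    (W : WeightSpace n H) (hW : W ∈ Uset n H N hout a f lam θ r)
    (hstat : ∀ D, 0 ≤ lossRegDirDeriv hout a f lam W D) :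
    ∃ ε > 0, ∀ V : WeightSpace n H, ‖V - W‖ < ε →
      lossReg n H N hout a f lam W + θ / 2 * ‖V - W‖ ^ 2 ≤ lossReg n H N hout a f lam V := by
  have herror : ∀ᶠ D in 𝓝 (0 : WeightSpace n H), ∀ i, |netOut n H hout (W + D) (a i) -
      netOut n H hout W (a i) - netOutDirDeriv hout W D (a i)| ≤
        H * (H + 1) / 2 * (starNorm n H W + ‖D‖) ^ (H - 1) * ‖D‖ ^ 2 * r := by
    refine eventually_all.2 fun i => ?_
    filter_upwards [eventually_abs_netOut_add_sub_sub_le hout W (a i)] with D hD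
    have hstar := starNorm_nonneg W
    exact hD.trans (by gcongr; exact hnorm i)
  obtain ⟨ε, hε, hball⟩ :=
    Metric.eventually_nhds_iff.1 (herror.and (eventually_lossError_le_of_mem_Uset hH hr hW))
  refine ⟨ε, hε, fun V hV => ?_⟩
  obtain ⟨herrorV, hsmall⟩ := hball (by rwa [dist_zero_right] : dist (V - W) 0 < ε)
  have hstar := starNorm_nonneg W
  have hlower := lossReg_add_ge hout a f lam W (V - W) (by positivity) herrorV
  rw [add_sub_cancel] at hlower
  linarith [hstat (V - W)]

/-- every critical point of `ℓ_λ` in `U(λ,θ)` is an isolated local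
minimum: if `ℓ_λ` is differentiable at `W ∈ U(λ,θ)` with vanishing derivative, then
`ℓ_λ(V) > ℓ_λ(W)` for all `V` with `0 < ‖V − W‖ < ε`, for some `ε > 0`. -/
theorem critical_points_are_isolated_local_minima (n : ℕ → ℕ) (H : ℕ) (hH : 1 ≤ H)
    (hout : n (H + 1) = 1) (hwidth : ∀ i, 1 ≤ i → i ≤ H → 1 < n i)
    (N : ℕ) (a : Fin N → EuclideanSpace ℝ (Fin (n 0)))
    (f : EuclideanSpace ℝ (Fin (n 0)) → ℝ)
    (r lam θ : ℝ) (hr : 0 < r) (hθ : 0 < θ) (hθlam : θ < lam)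
    (hnorm : ∀ i, ‖a i‖ ≤ r)
    (W : WeightSpace n H) (hW : W ∈ Uset n H N hout a f lam θ r)
    (hdiff : DifferentiableAt ℝ (lossReg n H N hout a f lam) W)
    (hcrit : fderiv ℝ (lossReg n H N hout a f lam) W = 0) :
    ∃ ε > 0, ∀ V : WeightSpace n H, 0 < ‖V - W‖ → ‖V - W‖ < ε →
      lossReg n H N hout a f lam W < lossReg n H N hout a f lam V := by
  obtain ⟨ε, hε, hgrowth⟩ := critical_points_are_isolated_local_minima_general n H hH hout N a f
    r lam θ hr hnorm W hW fun D =>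
      (lossRegDirDeriv_eq_zero_of_hasFDerivAt hout a f lam (hcrit ▸ hdiff.hasFDerivAt) D).ge
  exact ⟨ε, hε, fun V hV hVε => (lt_add_of_pos_right _ (by positivity)).trans_le (hgrowth V hVε)⟩
end

section
/- For a deep linear network with H ≥ 1, the training loss ℓ(W) = (1/2N) Σ_{i=1}^N (f(aᵢ) − W_Hᵀ⋯W₀ᵀ aᵢ)² is everywhere smooth and satisfies Δℓ(W) ≥ 0 on all of ℝ^m; consequently ℓ has no local maxima unless it is constant. -/
open scoped BigOperators

/-- Activations of the deep linear network: `x_0 = a`, `x_{k+1} = W_k^T x_k`. -/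
def linAct (n : ℕ → ℕ) (H : ℕ) (W : WeightSpace n H)
    (a : EuclideanSpace ℝ (Fin (n 0))) : (k : ℕ) → k ≤ H + 1 → (Fin (n k) → ℝ)
  | 0, _ => a
  | k + 1, h => fun j =>
      ∑ l : Fin (n k), W ⟨⟨k, h⟩, (l, j)⟩ * linAct n H W a k (Nat.le_of_succ_le h) l

/-- Scalar output of the deep linear network, `y(a,W) = W_H^T ⋯ W_0^T a`. -/
def linOut (n : ℕ → ℕ) (H : ℕ) (hout : n (H + 1) = 1) (W : WeightSpace n H)
    (a : EuclideanSpace ℝ (Fin (n 0))) : ℝ :=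
  linAct n H W a (H + 1) le_rfl ⟨0, by omega⟩

/-- Quadratic training loss `ℓ(W)` of the deep linear network. -/
noncomputable def linLoss (n : ℕ → ℕ) (H N : ℕ) (hout : n (H + 1) = 1)
    (a : Fin N → EuclideanSpace ℝ (Fin (n 0)))
    (f : EuclideanSpace ℝ (Fin (n 0)) → ℝ) (W : WeightSpace n H) : ℝ :=
  (1 / (2 * (N : ℝ))) * ∑ i, (f (a i) - linOut n H hout W (a i)) ^ 2

/-- Regularized loss `ℓ_λ(W) = ℓ(W) + (λ/2)‖W‖²` of the deep linear network. -/
noncomputable def linLossReg (n : ℕ → ℕ) (H N : ℕ) (hout : n (H + 1) = 1)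
    (a : Fin N → EuclideanSpace ℝ (Fin (n 0)))
    (f : EuclideanSpace ℝ (Fin (n 0)) → ℝ) (lam : ℝ) (W : WeightSpace n H) : ℝ :=
  linLoss n H N hout a f W + lam / 2 * ‖W‖ ^ 2

/-!
The output `y(a, W)` is affine in the weights of each single layer, so every squared residual, and
hence the loss, is convex along each coordinate axis; its pure second derivatives are therefore
nonnegative.

For the maximum principle, let `x` be a local maximum of a separately convex `g` and move from `x`
to a nearby point one coordinate at a time. If `g y = g x` after some moves, then
`2 * g y ≤ g (y + s) + g (y - s)` for the next coordinate move `s`, while both terms on the right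
are at most `g x`; hence `g (y + s) = g x` as well. So `g` is constant near `x`, and since the loss
is a polynomial, the identity theorem makes it constant.
-/

section SeparateConvexity

open Set Filter Module Topology

variable {ι E : Type*}

lemma deriv_deriv_nonneg_of_convexOn {φ : ℝ → ℝ} (hφ : ConvexOn ℝ univ φ)
    (hd : Differentiable ℝ φ) (t : ℝ) : 0 ≤ deriv (deriv φ) t :=
  (monotoneOn_univ.1 (hφ.monotoneOn_deriv fun s _ => hd s)).deriv_nonneg

lemma convexOn_sub_affineMap_sq [AddCommGroup E] [Module ℝ E] (c : ℝ) (A : E →ᵃ[ℝ] ℝ) :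
    ConvexOn ℝ univ fun x => (c - A x) ^ 2 :=
  (even_two.convexOn_pow (𝕜 := ℝ)).comp_affineMap (AffineMap.const ℝ E c - A)

/-- Convexity of `g` along every line whose direction is one of the vectors `e i`. When `e` is a
basis this is separate convexity in the coordinates with respect to `e`. -/
def ConvexAlong [AddCommGroup E] [Module ℝ E] (e : ι → E) (g : E → ℝ) : Prop :=
  ∀ x i, ConvexOn ℝ univ fun t : ℝ => g (x + t • e i)

namespace ConvexAlong

section Module

variable [AddCommGroup E] [Module ℝ E] {e : ι → E} {g : E → ℝ}

lemma two_mul_le_add_sub (hg : ConvexAlong e g) (x : E) (i : ι) (t : ℝ) :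
    2 * g x ≤ g (x + t • e i) + g (x - t • e i) := by
  have hmid := (hg x i).2 (mem_univ t) (mem_univ (-t))
    (by norm_num : (0 : ℝ) ≤ 1 / 2) (by norm_num : (0 : ℝ) ≤ 1 / 2) (by norm_num)
  simp only [smul_eq_mul, mul_neg, add_neg_cancel, zero_smul, add_zero, neg_smul,
    ← sub_eq_add_neg] at hmid
  linarith

lemma const_mul {c : ℝ} (hc : 0 ≤ c) (hg : ConvexAlong e g) :
    ConvexAlong e fun x => c * g x :=
  fun x i => (hg x i).smul hc

lemma sum {κ : Type*} {s : Finset κ} {g : κ → E → ℝ} (hg : ∀ k ∈ s, ConvexAlong e (g k)) :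
    ConvexAlong e fun x => ∑ k ∈ s, g k x := by
  intro x i
  have hsum : ConvexOn ℝ univ (∑ k ∈ s, fun t : ℝ => g k (x + t • e i)) :=
    Finset.sum_induction _ (ConvexOn ℝ univ) (fun _ _ => ConvexOn.add)
      (convexOn_const 0 convex_univ) fun k hk => hg k hk x i
  simpa only [Finset.sum_fn] using hsum

end Module

lemma sum_deriv_deriv_nonneg [Fintype ι] [NormedAddCommGroup E] [NormedSpace ℝ E]
    {e : ι → E} {g : E → ℝ} (hg : ConvexAlong e g) (hd : Differentiable ℝ g) (x : E) :
    0 ≤ ∑ i, deriv (deriv fun t : ℝ => g (x + t • e i)) 0 :=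
  Finset.sum_nonneg fun i _ => deriv_deriv_nonneg_of_convexOn (hg x i) (by fun_prop) 0

theorem eventually_eq_of_isLocalMax [Finite ι] [AddCommGroup E] [Module ℝ E]
    [TopologicalSpace E] [IsTopologicalAddGroup E] [ContinuousSMul ℝ E] [T2Space E]
    {b : Basis ι ℝ E} {g : E → ℝ} (hg : ConvexAlong b g) {x : E} (hx : IsLocalMax g x) :
    ∀ᶠ y in 𝓝 x, g y = g x := by
  have := b.finiteDimensional_of_finite
  have := Fintype.ofFinite ι
  have hcoord (i : ι) : Continuous (b.coord i) := LinearMap.continuous_of_finiteDimensional _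
  let move (S : Finset ι) (y : E) : E := x + ∑ i ∈ S, b.coord i (y - x) • b i
  have hle {p : E → E} (hp : Continuous p) (hpx : p x = x) : ∀ᶠ y in 𝓝 x, g (p y) ≤ g x :=
    (hp.tendsto' x x hpx).eventually hx
  have hmove (S : Finset ι) : ∀ᶠ y in 𝓝 x, g (move S y) = g x := by
    classical
    induction S using Finset.induction_on with
    | empty => simp [move]
    | insert i S hi ih =>
      have hplus := hle (p := fun y => move S y + b.coord i (y - x) • b i)
        (by fun_prop) (by simp [move])
      have hminus := hle (p := fun y => move S y - b.coord i (y - x) • b i)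
        (by fun_prop) (by simp [move])
      filter_upwards [ih, hplus, hminus] with y hy hadd hsub
      have hinsert : move (insert i S) y = move S y + b.coord i (y - x) • b i := by
        simp only [move, Finset.sum_insert hi]
        abel
      have hmid := hg.two_mul_le_add_sub (move S y) i (b.coord i (y - x))
      rw [hinsert]
      linarith
  have huniv (y : E) : move Finset.univ y = y := by
    simp only [move, Basis.coord_apply, b.sum_repr, add_sub_cancel]
  simpa only [huniv] using hmove Finset.univ

theorem eq_of_isLocalMax [Finite ι] [NormedAddCommGroup E] [NormedSpace ℝ E]
    {b : Basis ι ℝ E} {g : E → ℝ} (hg : ConvexAlong b g) (han : AnalyticOnNhd ℝ g univ)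
    {x : E} (hx : IsLocalMax g x) (y : E) : g y = g x :=
  congrFun (han.eq_of_eventuallyEq (fun _ _ => analyticAt_const)
    (hg.eventually_eq_of_isLocalMax hx)) y

end ConvexAlong

end SeparateConvexity

section LinearNetwork

variable {n : ℕ → ℕ} {H : ℕ}

lemma analyticAt_linAct (a : EuclideanSpace ℝ (Fin (n 0))) (k : ℕ) (hk : k ≤ H + 1)
    (j : Fin (n k)) (W : WeightSpace n H) :
    AnalyticAt ℝ (fun W : WeightSpace n H => linAct n H W a k hk j) W := by
  induction k with
  | zero => exact analyticAt_const
  | succ k ih =>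
    exact Finset.analyticAt_fun_sum _ fun l _ =>
      ((EuclideanSpace.proj (𝕜 := ℝ) (⟨⟨k, hk⟩, (l, j)⟩ : WeightIdx n H)).analyticAt W).fun_mul
        (ih _ l)

lemma linAct_congr {W W' : WeightSpace n H} (a : EuclideanSpace ℝ (Fin (n 0))) {k : ℕ}
    (hk : k ≤ H + 1) (hW : ∀ i : Fin (H + 1), i < k → ∀ p, W ⟨i, p⟩ = W' ⟨i, p⟩) :
    linAct n H W a k hk = linAct n H W' a k hk := by
  induction k with
  | zero => rfl
  | succ k ih =>
    ext j
    simp only [linAct, hW ⟨k, hk⟩ k.lt_succ_self,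
      ih (Nat.le_of_succ_le hk) fun i hi => hW i (hi.trans k.lt_succ_self)]

lemma linAct_lineMap {W W' : WeightSpace n H} {i : Fin (H + 1)}
    (hW : ∀ m ≠ i, ∀ p, W ⟨m, p⟩ = W' ⟨m, p⟩) (a : EuclideanSpace ℝ (Fin (n 0))) (t : ℝ)
    (k : ℕ) (hk : k ≤ H + 1) (j : Fin (n k)) :
    linAct n H (AffineMap.lineMap W W' t) a k hk j =
      AffineMap.lineMap (linAct n H W a k hk j) (linAct n H W' a k hk j) t := by
  have hcoord (c : WeightIdx n H) :
      (AffineMap.lineMap W W' t : WeightSpace n H) c = W c + t * (W' c - W c) := by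
    simp [AffineMap.lineMap_apply, add_comm]
  induction k with
  | zero => simp [linAct]
  | succ k ih =>
    simp only [linAct, AffineMap.lineMap_apply_ring', hcoord] at ih ⊢
    rw [← Finset.sum_sub_distrib, Finset.mul_sum, ← Finset.sum_add_distrib]
    refine Finset.sum_congr rfl fun l _ => ?_
    rw [ih]
    by_cases hki : (⟨k, hk⟩ : Fin (H + 1)) = i
    · have hact : linAct n H W' a k (Nat.le_of_succ_le hk) =
          linAct n H W a k (Nat.le_of_succ_le hk) :=
        linAct_congr a _ fun m hm p => (hW m (by rintro rfl; simp [← hki] at hm) p).symm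
      rw [hact]
      ring
    · rw [hW _ hki]
      ring

variable (hout : n (H + 1) = 1)

lemma linOut_lineMap {W W' : WeightSpace n H} {i : Fin (H + 1)}
    (hW : ∀ m ≠ i, ∀ p, W ⟨m, p⟩ = W' ⟨m, p⟩) (a : EuclideanSpace ℝ (Fin (n 0))) (t : ℝ) :
    linOut n H hout (AffineMap.lineMap W W' t) a =
      AffineMap.lineMap (linOut n H hout W a) (linOut n H hout W' a) t :=
  linAct_lineMap hW a t _ _ _

lemma linOut_add_smul_single (W : WeightSpace n H) (c : WeightIdx n H)
    (a : EuclideanSpace ℝ (Fin (n 0))) (t : ℝ) :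
    linOut n H hout (W + t • EuclideanSpace.single c 1) a =
      AffineMap.lineMap (linOut n H hout W a)
        (linOut n H hout (W + EuclideanSpace.single c 1) a) t := by
  have hlayer : ∀ m ≠ c.1, ∀ p,
      W ⟨m, p⟩ = (W + EuclideanSpace.single c (1 : ℝ) : WeightSpace n H) ⟨m, p⟩ := by
    intro m hm p
    have hne : (⟨m, p⟩ : WeightIdx n H) ≠ c := fun h => hm (congrArg Sigma.fst h)
    simp [hne]
  rw [← linOut_lineMap hout hlayer]
  simp [AffineMap.lineMap_apply, add_comm]

variable {N : ℕ} (a : Fin N → EuclideanSpace ℝ (Fin (n 0)))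
  (f : EuclideanSpace ℝ (Fin (n 0)) → ℝ)

lemma analyticOnNhd_linLoss : AnalyticOnNhd ℝ (linLoss n H N hout a f) Set.univ := fun W _ =>
  analyticAt_const.fun_mul <| Finset.analyticAt_fun_sum _ fun i _ =>
    (analyticAt_const.fun_sub (analyticAt_linAct (a i) _ _ _ W)).fun_pow 2

lemma convexAlong_linLoss :
    ConvexAlong (EuclideanSpace.basisFun (WeightIdx n H) ℝ).toBasis
      (linLoss n H N hout a f) := by
  refine ConvexAlong.const_mul (by positivity) (ConvexAlong.sum fun i _ W c => ?_)
  simpa only [OrthonormalBasis.coe_toBasis, EuclideanSpace.basisFun_apply,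
    linOut_add_smul_single hout] using convexOn_sub_affineMap_sq (f (a i)) (AffineMap.lineMap _ _)

end LinearNetwork

theorem linear_loss_smooth_subharmonic_no_local_max_general (n : ℕ → ℕ) (H : ℕ)
    (hout : n (H + 1) = 1) (N : ℕ) (a : Fin N → EuclideanSpace ℝ (Fin (n 0)))
    (f : EuclideanSpace ℝ (Fin (n 0)) → ℝ) :
    AnalyticOnNhd ℝ (linLoss n H N hout a f) Set.univ ∧
    (∀ W : WeightSpace n H,
      0 ≤ ∑ c : WeightIdx n H,
        deriv (deriv fun t : ℝ =>
          linLoss n H N hout a f (W + t • EuclideanSpace.single c (1 : ℝ))) 0) ∧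
    ((∃ Wstar : WeightSpace n H, IsLocalMax (linLoss n H N hout a f) Wstar) →
      ∀ V V' : WeightSpace n H, linLoss n H N hout a f V = linLoss n H N hout a f V') := by
  have hanalytic := analyticOnNhd_linLoss hout a f
  have hconvex := convexAlong_linLoss hout a f
  refine ⟨hanalytic, fun W => ?_, ?_⟩
  · simpa using hconvex.sum_deriv_deriv_nonneg (fun W => (hanalytic W trivial).differentiableAt) W
  · rintro ⟨Wstar, hmax⟩ V V'
    exact (hconvex.eq_of_isLocalMax hanalytic hmax V).trans
      (hconvex.eq_of_isLocalMax hanalytic hmax V').symm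

/-- for a deep linear network with `H ≥ 1`, the training loss `ℓ` is
everywhere smooth, its Laplacian (in the weight variables) is everywhere `≥ 0`, and
consequently `ℓ` has no local maxima unless it is constant. -/
theorem linear_loss_smooth_subharmonic_no_local_max (n : ℕ → ℕ) (H : ℕ) (hH : 1 ≤ H)
    (hout : n (H + 1) = 1) (hwidth : ∀ i, 1 ≤ i → i ≤ H → 1 < n i)
    (N : ℕ) (a : Fin N → EuclideanSpace ℝ (Fin (n 0)))
    (f : EuclideanSpace ℝ (Fin (n 0)) → ℝ) :
    ContDiff ℝ (⊤ : ℕ∞) (linLoss n H N hout a f) ∧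
    (∀ W : WeightSpace n H,
      0 ≤ ∑ c : WeightIdx n H,
        deriv (deriv fun t : ℝ =>
          linLoss n H N hout a f (W + t • EuclideanSpace.single c (1 : ℝ))) 0) ∧
    ((∃ Wstar : WeightSpace n H, IsLocalMax (linLoss n H N hout a f) Wstar) →
      ∀ V V' : WeightSpace n H, linLoss n H N hout a f V = linLoss n H N hout a f V') := by
  obtain ⟨hanalytic, hrest⟩ :=
    linear_loss_smooth_subharmonic_no_local_max_general n H hout N a f
  exact ⟨hanalytic.contDiff, hrest⟩
end
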